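/- arXiv:2503.17572 — 2 statements merged into one kernel-verified Lean document; each statement's English description precedes it below -/
import Mathlib

section
/- Both [Inf G Mon Bc] and [Inf G Mon^d Bc] are proper subsets of [Inf G Bc]. -/
open Filter Classical

namespace InfBc

/-! ### Basic notions: r.e. sets, informants, learners -/

/-- The `e`-th recursively enumerable set (via an acceptable numbering of
partial computable functions, `W e = dom φ_e`). -/
def W (e : ℕ) : Set ℕ := {x | ((Denumerable.ofNat Nat.Partrec.Code e).eval x).Dom}

/-- A language is recursively enumerable. -/
def RE (L : Set ℕ) : Prop := ∃ e, W e = L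

abbrev Datum := ℕ × Bool
abbrev Seq := List Datum
abbrev Informant := ℕ → Datum
abbrev HypSeq := ℕ → Part ℕ
/-- Learners are partial functions; all input types are coded into `ℕ`. -/
abbrev Learner := ℕ →. ℕ
abbrev Restriction := HypSeq → Informant → Prop

/-- Positive information of an infinite sequence. -/
def posI (I : Informant) : Set ℕ := {x | ∃ n, I n = (x, true)}
/-- Negative information of an infinite sequence. -/
def negI (I : Informant) : Set ℕ := {x | ∃ n, I n = (x, false)}

/-- `I` is an informant for the language `L`. -/
def IsInformant (I : Informant) (L : Set ℕ) : Prop := posI I = L ∧ negI I = Lᶜ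

/-- `I` is an informant (for some language), i.e. `I ∈ Inf`. -/
def IsInf (I : Informant) : Prop := IsInformant I (posI I)

/-- `I` is a canonical informant. -/
def Canonical (I : Informant) : Prop := ∀ x, I x = (x, true) ∨ I x = (x, false)

/-- `I[n]`, the length-`n` initial segment of `I`. -/
def segment (I : Informant) (n : ℕ) : Seq := (List.range n).map I

/-- Positive information of a finite sequence. -/
def posS (σ : Seq) : Set ℕ := {x | (x, true) ∈ σ}
/-- Negative information of a finite sequence. -/
def negS (σ : Seq) : Set ℕ := {x | (x, false) ∈ σ}
/-- The content of a finite sequence, as a set. -/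
def contentS (σ : Seq) : Set Datum := {a | a ∈ σ}

/-! ### Interaction operators -/

abbrev InteractionOperator := Learner → Informant → HypSeq

/-- Full-information (Gold-style) interaction: `G(h,I)(i) = h(I[i])`. -/
def Gop : InteractionOperator := fun h I i => h (Encodable.encode (segment I i))

/-- Set-driven interaction: `Sd(h,I)(i) = h(content(I[i]))`. -/
def Sdop : InteractionOperator := fun h I i => h (Encodable.encode (segment I i).toFinset)

/-- The iterated evaluation of an iterative learner on a finite sequence:
start with the initial hypothesis `h(none)` and feed the data one by one. -/
def iterExtend (h : Learner) (σ : Seq) : Part ℕ :=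
  σ.foldl (fun pe a => pe.bind fun e => h (Encodable.encode (some (e, a))))
    (h (Encodable.encode (none : Option (ℕ × Datum))))

/-- Iterative interaction: `It(h,I)(i)` is obtained by feeding `I[i]` one datum
at a time, each time updating the previous hypothesis. -/
def Itop : InteractionOperator := fun h I i => iterExtend h (segment I i)

/-- An iterative learner is confluent if the order and multiplicity in which
the content is presented does not matter. -/
def ConfluentLearner (h : Learner) : Prop :=
  ∀ σ τ : Seq, contentS σ = contentS τ → iterExtend h σ = iterExtend h τ

/-- Confluently iterative interaction. -/
noncomputable def CflItop : InteractionOperator := fun h I i =>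
  if ConfluentLearner h then iterExtend h (segment I i) else Part.none

/-- `β ≼ β'`: every (partial computable) `β`-learner can be translated into a
`β'`-learner with the same hypothesis sequence on every informant. -/
def OpLe (β β' : InteractionOperator) : Prop :=
  ∀ h : Learner, Partrec h → ∃ h' : Learner, Partrec h' ∧
    ∀ I : Informant, IsInf I → ∀ n, β h I n = β' h' I n

/-! ### Learning restrictions -/

/-- The trivial restriction `T`. -/
def TT : Restriction := fun _ _ => True

/-- Explanatory identification. -/
def Ex : Restriction := fun p I =>
  ∃ q, W q = posI I ∧ ∀ᶠ n in atTop, p n = Part.some q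

/-- Behaviorally correct identification. -/
def Bc : Restriction := fun p I => ∀ᶠ n in atTop, ∃ e ∈ p n, W e = posI I

/-- Consistency of a hypothesis with a finite sequence of data. -/
def ConsH (e : ℕ) (σ : Seq) : Prop := posS σ ⊆ W e ∧ negS σ ∩ W e = ∅

/-- Consistency of a hypothesis sequence with an informant. -/
def Cons : Restriction := fun p I => ∀ n, ∃ e ∈ p n, ConsH e (segment I n)

/-- Strongly monotone. -/
def SMon : Restriction := fun p _ =>
  ∀ s t, s ≤ t → ∀ e ∈ p s, ∀ e' ∈ p t, W e ⊆ W e'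

/-- Dual strongly monotone. -/
def SMond : Restriction := fun p _ =>
  ∀ s t, s ≤ t → ∀ e ∈ p s, ∀ e' ∈ p t, W e' ⊆ W e

/-- Monotone. -/
def Mon : Restriction := fun p I =>
  ∀ s t, s ≤ t → ∀ e ∈ p s, ∀ e' ∈ p t, W e ∩ posI I ⊆ W e' ∩ posI I

/-- Dual monotone. -/
def Mond : Restriction := fun p I =>
  ∀ s t, s ≤ t → ∀ e ∈ p s, ∀ e' ∈ p t, (W e)ᶜ ∩ negI I ⊆ (W e')ᶜ ∩ negI I

/-- Weakly monotone. -/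
def WMon : Restriction := fun p I =>
  ∀ s t, s ≤ t → ∀ e ∈ p s, ConsH e (segment I t) → ∀ e' ∈ p t, W e ⊆ W e'

/-- Dual weakly monotone. -/
def WMond : Restriction := fun p I =>
  ∀ s t, s ≤ t → ∀ e ∈ p s, ConsH e (segment I t) → ∀ e' ∈ p t, W e' ⊆ W e

/-- Cautious. -/
def Caut : Restriction := fun p _ =>
  ∀ s t, s < t → ∀ e ∈ p s, ∀ e' ∈ p t, ¬ W e' ⊂ W e

/-- Target cautious. -/
def CautTar : Restriction := fun p I =>
  ∀ s, ∀ e ∈ p s, ¬ posI I ⊂ W e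

/-- Finitely cautious. -/
def CautFin : Restriction := fun p _ =>
  ∀ s t, s < t → ∀ e ∈ p s, ∀ e' ∈ p t, W e' ⊂ W e → (W e').Infinite

/-- Infinitely cautious. -/
def CautInf : Restriction := fun p _ =>
  ∀ s t, s < t → ∀ e ∈ p s, ∀ e' ∈ p t, W e' ⊂ W e → (W e').Finite

/-! ### Learnability -/

/-- The class of admissible learners: all partial computable learners. -/
def AllL : Learner → Prop := fun _ => True
/-- The class of admissible learners: total computable learners (`ℛ`). -/
def TotalL : Learner → Prop := fun h => ∀ x, (h x).Dom
/-- Admissible informants: all informants (`Inf`). -/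
def AllI : Informant → Prop := fun _ => True

/-- `h` learns `L` in the setting given by admissible informants `P`,
interaction operator `β` and local restriction `δ`. -/
def LearnsWith (P : Informant → Prop) (β : InteractionOperator) (δ : Restriction)
    (h : Learner) (L : Set ℕ) : Prop :=
  RE L ∧ ∀ I : Informant, P I → IsInformant I L → δ (β h I) I

/-- `[τ(α) C P β δ]`: the collection of all classes of languages learnable by
some learner in `C` that satisfies the global restriction `α` on all admissible
informants, under interaction operator `β` and local restriction `δ`. -/
def Learnable (α : Restriction) (C : Learner → Prop) (P : Informant → Prop)
    (β : InteractionOperator) (δ : Restriction) : Set (Set (Set ℕ)) :=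
  {𝓛 | ∃ h : Learner, Partrec h ∧ C h ∧
        (∀ I : Informant, IsInf I → P I → α (β h I) I) ∧
        ∀ L ∈ 𝓛, LearnsWith P β δ h L}

/-! ### Properties of restrictions -/

/-- A learning restriction is delayable if it is preserved under postponing
hypotheses along a non-decreasing unbounded function. -/
def Delayable (δ : Restriction) : Prop :=
  ∀ I I' : Informant, IsInf I → IsInf I' → Set.range I = Set.range I' →
    ∀ (p : HypSeq) (s : ℕ → ℕ), Monotone s → (∀ m, ∃ n, m ≤ s n) →
      δ p I → (∀ n, contentS (segment I (s n)) ⊆ contentS (segment I' n)) →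
      δ (fun n => p (s n)) I'

/-- A learning restriction is semantic if it is indifferent to replacing the
hypothesis sequence by a semantically equivalent one. -/
def Semantic (δ : Restriction) : Prop :=
  ∀ (p p' : HypSeq) (I : Informant), δ p I →
    (∀ i, (p i).Dom ↔ (p' i).Dom) →
    (∀ i, ∀ e ∈ p i, ∀ e' ∈ p' i, W e = W e') →
    δ p' I

/-!
The separating class consists of all finite and all cofinite languages. It is `Bc`-learnable by
extrapolation: label each number like the largest classified number not exceeding it. This is
correct as soon as everything up to the point where the language becomes constant is classified.

No learner can also be monotone on it. On canonical data for `ℕ` the learner conjectures `ℕ` at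
some stage `N`; if the data then turn negative it conjectures `{x | x < N}` at some stage `M ≥ N`;
and the target may still be the cofinite set `{x | x < N ∨ M ≤ x}`, whose element `M` was
conjectured and then given up. Exchanging the roles of positive and negative data refutes dual
monotonicity.
-/

theorem learnable_mono {α δ δ' : Restriction} {C : Learner → Prop} {P : Informant → Prop}
    {β : InteractionOperator} (hδ : ∀ p I, δ p I → δ' p I) :
    Learnable α C P β δ ⊆ Learnable α C P β δ' := by
  rintro 𝓛 ⟨h, hh, hC, hα, hlearns⟩
  exact ⟨h, hh, hC, hα, fun L hL =>
    ⟨(hlearns L hL).1, fun I hP hI => hδ _ _ ((hlearns L hL).2 I hP hI)⟩⟩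

/-! ### Informants and their initial segments -/

theorem mem_segment {I : Informant} {n : ℕ} {d : Datum} :
    d ∈ segment I n ↔ ∃ i < n, I i = d := by
  simp [segment]

namespace IsInformant

variable {I : Informant} {L : Set ℕ}

theorem posS_segment_subset (hI : IsInformant I L) (n : ℕ) : posS (segment I n) ⊆ L := by
  intro x hx
  obtain ⟨i, -, hi⟩ := mem_segment.1 hx
  exact hI.1 ▸ ⟨i, hi⟩

theorem negS_segment_subset (hI : IsInformant I L) (n : ℕ) : negS (segment I n) ⊆ Lᶜ := by
  intro x hx
  obtain ⟨i, -, hi⟩ := mem_segment.1 hx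
  exact hI.2 ▸ ⟨i, hi⟩

theorem eventually_mem_segment (hI : IsInformant I L) (x : ℕ) :
    ∀ᶠ n in atTop, x ∈ posS (segment I n) ∪ negS (segment I n) := by
  have hx : x ∈ posI I ∪ negI I := by
    rw [hI.1, hI.2, Set.union_compl_self]
    trivial
  rcases hx with ⟨i, hi⟩ | ⟨i, hi⟩ <;> filter_upwards [eventually_gt_atTop i] with n hn
  · exact Or.inl (mem_segment.2 ⟨i, hn, hi⟩)
  · exact Or.inr (mem_segment.2 ⟨i, hn, hi⟩)

theorem eventually_Iic_subset_segment (hI : IsInformant I L) (k : ℕ) :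
    ∀ᶠ n in atTop, Set.Iic k ⊆ posS (segment I n) ∪ negS (segment I n) :=
  (eventually_all_finite (Set.finite_Iic k)).2 fun x _ => hI.eventually_mem_segment x

end IsInformant

/-- The canonical informant for `L`, which presents the numbers in their natural order. -/
noncomputable def canonicalInformant (L : Set ℕ) : Informant := fun x => (x, decide (x ∈ L))

theorem canonical_canonicalInformant (L : Set ℕ) : Canonical (canonicalInformant L) := by
  intro x
  by_cases hx : x ∈ L <;> simp [canonicalInformant, hx]

theorem isInformant_canonicalInformant (L : Set ℕ) : IsInformant (canonicalInformant L) L := by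
  constructor <;> ext x <;> simp [posI, negI, canonicalInformant]

theorem segment_canonicalInformant_congr {L L' : Set ℕ} {n : ℕ}
    (h : ∀ x < n, (x ∈ L ↔ x ∈ L')) :
    segment (canonicalInformant L) n = segment (canonicalInformant L') n :=
  List.map_congr_left fun x hx => by simp only [canonicalInformant, h x (List.mem_range.1 hx)]

/-! ### `Bc`-learning from uniformly r.e. conjectures -/

theorem exists_computable_W_eq {α : Type*} [Primcodable α] {H : α → Set ℕ}
    (hH : REPred fun q : α × ℕ => q.2 ∈ H q.1) :
    ∃ g : α → ℕ, Computable g ∧ ∀ a, W (g a) = H a := by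
  obtain ⟨c, hc⟩ := Nat.Partrec.Code.exists_code.1 hH
  refine ⟨fun a => Encodable.encode (c.curry (Encodable.encode a)), ?_, fun a => ?_⟩
  · exact (Primrec.encode.comp
      (Nat.Partrec.Code.primrec₂_curry.comp (Primrec.const c) Primrec.encode)).to_comp
  · ext x
    simp [W, hc, Nat.Partrec.Code.eval_curry, Part.assert]

theorem mem_learnable_bc_of_eventually_eq {𝓛 : Set (Set ℕ)} {H : Seq → Set ℕ}
    (hH : REPred fun q : Seq × ℕ => q.2 ∈ H q.1)
    (hlim : ∀ L ∈ 𝓛, ∀ I, IsInformant I L → ∀ᶠ n in atTop, H (segment I n) = L) :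
    𝓛 ∈ Learnable TT AllL AllI Gop Bc := by
  obtain ⟨g, hg, hgH⟩ := exists_computable_W_eq hH
  let h : Learner := fun n => ((Encodable.decode n : Option Seq).map g : Option ℕ)
  have hpartrec : Partrec h :=
    (Computable.option_map Computable.decode (hg.comp Computable.snd).to₂).ofOption
  have hmem (σ : Seq) : g σ ∈ h (Encodable.encode σ) := by simp [h]
  refine ⟨h, hpartrec, trivial, fun _ _ _ => trivial, fun L hL => ⟨?_, fun I _ hI => ?_⟩⟩
  · obtain ⟨n, hn⟩ := (hlim L hL _ (isInformant_canonicalInformant L)).exists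
    exact ⟨g _, (hgH _).trans hn⟩
  · filter_upwards [hlim L hL I hI] with n hn
    exact ⟨_, hmem _, by rw [hgH, hn, hI.1]⟩

/-! ### Finite and cofinite languages -/

/-- The class of finite and of cofinite languages, which separates `Bc` from both of its monotone
variants. -/
def finiteOrCofinite : Set (Set ℕ) := {L | L.Finite ∨ Lᶜ.Finite}

theorem exists_forall_ge_mem_iff_of_mem_finiteOrCofinite {L : Set ℕ} (hL : L ∈ finiteOrCofinite) :
    ∃ k, ∀ x ≥ k, (x ∈ L ↔ k ∈ L) := by
  have hconst : EventuallyConst (· ∈ L) atTop := by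
    rw [eventuallyConst_pred, ← Nat.cofinite_eq_atTop]
    exact hL.symm.imp id Set.Finite.eventually_cofinite_notMem
  simpa only [eventuallyConst_atTop, eq_iff_iff] using hconst

/-- The language extrapolated from `σ`: every number is given the label of the largest number
classified by `σ` that does not exceed it, and is rejected if there is no such number. -/
def extrapolation (σ : Seq) : Set ℕ :=
  {x | ∃ y ∈ posS σ, y ≤ x ∧ ∀ z ∈ negS σ, y < z → x < z}

theorem rePred_mem_extrapolation : REPred fun q : Seq × ℕ => q.2 ∈ extrapolation q.1 := by
  have hcompatible : PrimrecRel fun (d : Datum) (p : ℕ × ℕ) =>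
      d.2 = true ∨ d.1 ≤ p.1 ∨ p.2 < d.1 :=
    (Primrec.eq.comp (.comp .snd .fst) (.const true)).or <|
      (Primrec.nat_le.comp (.comp .fst .fst) (.comp .fst .snd)).or
        (Primrec.nat_lt.comp (.comp .snd .snd) (.comp .fst .fst))
  have hwitness : PrimrecRel fun (d : Datum) (q : Seq × ℕ) =>
      d.2 = true ∧ d.1 ≤ q.2 ∧ ∀ d' ∈ q.1, d'.2 = true ∨ d'.1 ≤ d.1 ∨ q.2 < d'.1 :=
    (Primrec.eq.comp (.comp .snd .fst) (.const true)).and <|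
      (Primrec.nat_le.comp (.comp .fst .fst) (.comp .snd .snd)).and <|
        hcompatible.forall_mem_list.comp (.comp .fst .snd)
          (.pair (.comp .fst .fst) (.comp .snd .snd))
  have hprimrec : PrimrecPred fun q : Seq × ℕ => q.2 ∈ extrapolation q.1 := by
    refine (hwitness.exists_mem_list.comp .fst .id).of_eq fun q => ?_
    simp [extrapolation, posS, negS, or_iff_not_imp_left]
  exact hprimrec.computablePred.to_re

theorem extrapolation_eq {σ : Seq} {L : Set ℕ} {k : ℕ} (hk : ∀ x ≥ k, (x ∈ L ↔ k ∈ L))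
    (hpos : posS σ ⊆ L) (hneg : negS σ ⊆ Lᶜ) (hσ : Set.Iic k ⊆ posS σ ∪ negS σ) :
    extrapolation σ = L := by
  have hstable {x y : ℕ} (hy : min x k ≤ y) (hyx : y ≤ x) : y ∈ L ↔ x ∈ L := by
    rcases le_total x k with hx | hx
    · rw [hyx.antisymm (min_eq_left hx ▸ hy)]
    · rw [hk y (min_eq_right hx ▸ hy), hk x hx]
  ext x
  have hmin : min x k ∈ L ↔ x ∈ L := hstable le_rfl (min_le_left x k)
  constructor
  · rintro ⟨y, hy, hyx, hyneg⟩
    by_contra hx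
    have hxneg : min x k ∈ negS σ :=
      (hσ (min_le_right x k)).resolve_left fun h => hx (hmin.1 (hpos h))
    have hlt : y < min x k := not_le.1 fun hle => hx ((hstable hle hyx).1 (hpos hy))
    exact (hyneg _ hxneg hlt).not_ge (min_le_left x k)
  · intro hx
    have hxpos : min x k ∈ posS σ :=
      (hσ (min_le_right x k)).resolve_right fun h => hneg h (hmin.2 hx)
    exact ⟨min x k, hxpos, min_le_left x k, fun z hz hlt =>
      not_le.1 fun hzx => hneg hz ((hstable hlt.le hzx).2 hx)⟩

theorem finiteOrCofinite_mem_learnable_bc :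
    finiteOrCofinite ∈ Learnable TT AllL AllI Gop Bc := by
  refine mem_learnable_bc_of_eventually_eq rePred_mem_extrapolation fun L hL I hI => ?_
  obtain ⟨k, hk⟩ := exists_forall_ge_mem_iff_of_mem_finiteOrCofinite hL
  filter_upwards [hI.eventually_Iic_subset_segment k] with n hn
  exact extrapolation_eq hk (hI.posS_segment_subset n) (hI.negS_segment_subset n) hn

/-! ### Monotone learners fail -/

theorem Bc.exists_hypothesis_of_agree_below {h : Learner} {L : Set ℕ}
    (hBc : Bc (Gop h (canonicalInformant L)) (canonicalInformant L)) (n : ℕ) :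
    ∃ m ≥ n, ∀ L' : Set ℕ, (∀ x < m, (x ∈ L ↔ x ∈ L')) →
      ∃ e ∈ Gop h (canonicalInformant L') m, W e = L := by
  obtain ⟨m, ⟨e, he, hWe⟩, hm⟩ := (hBc.and (eventually_ge_atTop n)).exists
  refine ⟨m, hm, fun L' hL' => ⟨e, ?_, hWe.trans (isInformant_canonicalInformant L).1⟩⟩
  rwa [Gop, ← segment_canonicalInformant_congr hL']

section Monotone

variable {α : Restriction} {C : Learner → Prop} {P : Informant → Prop}

theorem finiteOrCofinite_notMem_learnable_mon_bc (hP : ∀ I, Canonical I → P I) :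
    finiteOrCofinite ∉ Learnable α C P Gop (fun p I => Mon p I ∧ Bc p I) := by
  rintro ⟨h, -, -, -, hlearns⟩
  have hcan (L : Set ℕ) (hL : L ∈ finiteOrCofinite) :=
    (hlearns L hL).2 _ (hP _ (canonical_canonicalInformant L)) (isInformant_canonicalInformant L)
  obtain ⟨N, -, hN⟩ := (hcan Set.univ (Or.inr (by simp))).2.exists_hypothesis_of_agree_below 0
  obtain ⟨M, hNM, hM⟩ :=
    (hcan (Set.Iio N) (Or.inl (Set.finite_Iio N))).2.exists_hypothesis_of_agree_below N
  set L := Set.Iio N ∪ Set.Ici M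
  have hL : L ∈ finiteOrCofinite :=
    Or.inr (by simp [L, Set.compl_union, Set.Ici_inter_Iio, Set.finite_Ico])
  obtain ⟨e, he, hWe⟩ := hN L fun x hx => by simp [L, hx]
  obtain ⟨e', he', hWe'⟩ := hM L fun x hx => by simp [L, hx]
  have hsub : W e ∩ L ⊆ W e' ∩ L := by
    simpa only [(isInformant_canonicalInformant L).1] using (hcan L hL).1 N M hNM e he e' he'
  have hmem : M ∈ W e ∩ L := ⟨hWe ▸ trivial, Or.inr Set.self_mem_Ici⟩
  have hlt : M ∈ Set.Iio N := hWe' ▸ (hsub hmem).1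
  exact hlt.not_ge hNM

theorem finiteOrCofinite_notMem_learnable_mond_bc (hP : ∀ I, Canonical I → P I) :
    finiteOrCofinite ∉ Learnable α C P Gop (fun p I => Mond p I ∧ Bc p I) := by
  rintro ⟨h, -, -, -, hlearns⟩
  have hcan (L : Set ℕ) (hL : L ∈ finiteOrCofinite) :=
    (hlearns L hL).2 _ (hP _ (canonical_canonicalInformant L)) (isInformant_canonicalInformant L)
  obtain ⟨N, -, hN⟩ := (hcan ∅ (Or.inl Set.finite_empty)).2.exists_hypothesis_of_agree_below 0
  obtain ⟨M, hNM, hM⟩ :=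
    (hcan (Set.Ici N) (Or.inr (by simp [Set.finite_Iio]))).2.exists_hypothesis_of_agree_below N
  set L := Set.Ico N M
  obtain ⟨e, he, hWe⟩ := hN L fun x hx => by simp [L, hx]
  obtain ⟨e', he', hWe'⟩ := hM L fun x hx => by simp [L, hx]
  have hsub : (W e)ᶜ ∩ Lᶜ ⊆ (W e')ᶜ ∩ Lᶜ := by
    simpa only [(isInformant_canonicalInformant L).2] using
      (hcan L (Or.inl (Set.finite_Ico N M))).1 N M hNM e he e' he'
  have hmem : M ∈ (W e)ᶜ ∩ Lᶜ := by simp [hWe, L]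
  have hnotMem : M ∉ Set.Ici N := hWe' ▸ (hsub hmem).1
  exact hnotMem hNM

end Monotone

/-- Both `[Inf G Mon Bc]` and `[Inf G Mon^d Bc]` are proper
subsets of `[Inf G Bc]`. -/
theorem mon_and_dual_mon_proper_subsets_of_bc :
    Learnable TT AllL AllI Gop (fun p I => Mon p I ∧ Bc p I) ⊂
      Learnable TT AllL AllI Gop Bc ∧
    Learnable TT AllL AllI Gop (fun p I => Mond p I ∧ Bc p I) ⊂
      Learnable TT AllL AllI Gop Bc := by
  have hBc := finiteOrCofinite_mem_learnable_bc
  constructor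
  · refine ⟨learnable_mono fun _ _ h => h.2, fun hsub => ?_⟩
    exact finiteOrCofinite_notMem_learnable_mon_bc (fun _ _ => trivial) (hsub hBc)
  · refine ⟨learnable_mono fun _ _ h => h.2, fun hsub => ?_⟩
    exact finiteOrCofinite_notMem_learnable_mond_bc (fun _ _ => trivial) (hsub hBc)

end InfBc
end

section
/- Global consistency does not restrict dual weakly monotone behaviorally correct full-information learning from informants: [τ(Cons) Inf G WMon^d Bc] = [Inf G WMon^d Bc]. -/
open Filter Classical

namespace InfBc

/-!
From a learner `h` we build a learner conjecturing, on data `σ`, one of three languages. Call `σ`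
covered if every conjecture of `h` made since the last new positive datum contains all positive
data seen so far.

* If `σ` is not covered, conjecture the finite set `posS σ`.
* If `σ` is covered and `h` is consistent with `σ`, keep the language conjectured by `h`.
* If `σ` is covered and `h` contradicts a negative datum, conjecture everything but `negS σ`.

Being covered and contradicting a negative datum are both semidecidable, and up to negative data
each of these languages contains the previous one, so the new conjecture can be enumerated; it is
always consistent. A conjecture `posS σ` stays consistent only while no positive datum is added,
and until then no extension of `σ` becomes covered. The third conjecture contains every later
consistent one. Finally, if `h` converges, then either the target is finite and eventually
exhausted by the positive data, or a positive datum arrives after the point of convergence and all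
later data are covered.
-/

/-! ### Recursively enumerable predicates -/

section RecursivelyEnumerable

open Nat.Partrec (Code)

variable {α β : Type*} [Primcodable α] [Primcodable β] {p q : α → Prop} {r : α → β → Prop}

theorem exists_code_dom_iff (hp : REPred p) :
    ∃ c : Code, ∀ a, p a ↔ (c.eval (Encodable.encode a)).Dom := by
  obtain ⟨c, hc⟩ := Code.exists_code.1 hp
  exact ⟨c, fun a => by simp [hc, Part.assert]⟩

theorem rePred_iff_exists_monotone_primrecRel :
    REPred p ↔ ∃ stage : α → ℕ → Prop,
      PrimrecRel stage ∧ (∀ a, Monotone (stage a)) ∧ ∀ a, p a ↔ ∃ k, stage a k := by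
  constructor
  · intro hp
    obtain ⟨c, hc⟩ := exists_code_dom_iff hp
    refine ⟨fun a k => (Code.evaln k c (Encodable.encode a)).isSome = true, ?_, ?_, fun a => ?_⟩
    · have hevaln : Primrec fun x : α × ℕ => Code.evaln x.2 c (Encodable.encode x.1) :=
        Code.primrec_evaln.comp
          ((Primrec.snd.pair (Primrec.const c)).pair (Primrec.encode.comp Primrec.fst))
      exact Primrec.eq.comp (Primrec.option_isSome.comp hevaln) (Primrec.const true)
    · intro a k l hkl hk
      obtain ⟨y, hy⟩ := Option.isSome_iff_exists.1 hk
      exact Option.isSome_iff_exists.2 ⟨y, Code.evaln_mono hkl hy⟩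
    · simp only [hc, Part.dom_iff_mem, Code.evaln_complete, Option.isSome_iff_exists]
      exact exists_comm
  · rintro ⟨stage, hstage, -, hp⟩
    have hsearch : Partrec fun a => Nat.rfindOpt fun k => if stage a k then some () else none :=
      Partrec.rfindOpt
        (Primrec.ite hstage (Primrec.const (some ())) (Primrec.const none)).to_comp.to₂
    refine hsearch.dom_re.of_eq fun a => ?_
    simp [Nat.rfindOpt_dom, hp]

theorem exists_iff_eventually_atTop {stage : ℕ → Prop} (hstage : Monotone stage) :
    (∃ k, stage k) ↔ ∀ᶠ k in atTop, stage k :=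
  ⟨fun ⟨k, hk⟩ => eventually_atTop.2 ⟨k, fun _ hkl => hstage hkl hk⟩, Eventually.exists⟩

theorem rePred_comp {p : β → Prop} (hp : REPred p) {f : α → β} (hf : Computable f) :
    REPred fun a => p (f a) :=
  Partrec.comp hp hf

theorem rePred_and (hp : REPred p) (hq : REPred q) : REPred fun a => p a ∧ q a := by
  refine (Partrec.bind hp (hq.comp Computable.fst).to₂).dom_re.of_eq fun a => ?_
  simp [Part.bind_dom, Part.assert]

theorem rePred_or (hp : REPred p) (hq : REPred q) : REPred fun a => p a ∨ q a := by
  obtain ⟨P, hP, hPmono, hpP⟩ := rePred_iff_exists_monotone_primrecRel.1 hp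
  obtain ⟨Q, hQ, hQmono, hqQ⟩ := rePred_iff_exists_monotone_primrecRel.1 hq
  refine rePred_iff_exists_monotone_primrecRel.2 ⟨fun a k => P a k ∨ Q a k, PrimrecPred.or hP hQ,
    fun a _ _ hkl => Or.imp (hPmono a hkl) (hQmono a hkl), fun a => ?_⟩
  rw [hpP, hqQ, exists_or]

theorem rePred_imp (hp : ComputablePred p) (hq : REPred q) : REPred fun a => p a → q a :=
  (rePred_or hp.not.to_re hq).of_eq fun _ => imp_iff_not_or.symm

theorem rePred_exists_mem_part {g : α →. β} (hg : Partrec g)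
    (hr : REPred fun x : α × β => r x.1 x.2) : REPred fun a => ∃ b ∈ g a, r a b := by
  refine (hg.bind hr.to₂).dom_re.of_eq fun a => ?_
  simp [Part.dom_iff_mem]

theorem rePred_forall_mem_list {l : α → List β} (hl : Primrec l)
    (hr : REPred fun x : α × β => r x.1 x.2) : REPred fun a => ∀ b ∈ l a, r a b := by
  obtain ⟨R, hR, hRmono, hrR⟩ := rePred_iff_exists_monotone_primrecRel.1 hr
  have hRswap : PrimrecRel fun (b : β) (x : α × ℕ) => R (x.1, b) x.2 :=
    hR.comp ((Primrec.fst.comp Primrec.snd).pair Primrec.fst) (Primrec.snd.comp Primrec.snd)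
  have hmono (a : α) : Monotone fun k => ∀ b ∈ l a, R (a, b) k :=
    fun _ _ hkl h b hb => hRmono (a, b) hkl (h b hb)
  refine rePred_iff_exists_monotone_primrecRel.2 ⟨fun a k => ∀ b ∈ l a, R (a, b) k,
    hRswap.forall_mem_list.comp (hl.comp Primrec.fst) Primrec.id, hmono, fun a => ?_⟩
  calc (∀ b ∈ l a, r a b)
      ↔ ∀ b ∈ l a, ∀ᶠ k in atTop, R (a, b) k :=
        forall₂_congr fun b _ => (hrR (a, b)).trans (exists_iff_eventually_atTop (hRmono (a, b)))
    _ ↔ ∀ᶠ k in atTop, ∀ b ∈ l a, R (a, b) k := (eventually_all_finite (l a).finite_toSet).symm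
    _ ↔ ∃ k, ∀ b ∈ l a, R (a, b) k := (exists_iff_eventually_atTop (hmono a)).symm

theorem rePred_exists_mem_list {l : α → List β} (hl : Primrec l)
    (hr : REPred fun x : α × β => r x.1 x.2) : REPred fun a => ∃ b ∈ l a, r a b := by
  obtain ⟨R, hR, hRmono, hrR⟩ := rePred_iff_exists_monotone_primrecRel.1 hr
  have hRswap : PrimrecRel fun (b : β) (x : α × ℕ) => R (x.1, b) x.2 :=
    hR.comp ((Primrec.fst.comp Primrec.snd).pair Primrec.fst) (Primrec.snd.comp Primrec.snd)
  refine rePred_iff_exists_monotone_primrecRel.2 ⟨fun a k => ∃ b ∈ l a, R (a, b) k,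
    hRswap.exists_mem_list.comp (hl.comp Primrec.fst) Primrec.id,
    fun a _ _ hkl ⟨b, hb, h⟩ => ⟨b, hb, hRmono (a, b) hkl h⟩, fun a => ?_⟩
  calc (∃ b ∈ l a, r a b)
      ↔ ∃ b ∈ l a, ∃ k, R (a, b) k := by simp only [← hrR]
    _ ↔ ∃ k, ∃ b ∈ l a, R (a, b) k := by tauto

theorem rePred_mem_W {e x : α → ℕ} (he : Computable e) (hx : Computable x) :
    REPred fun a => x a ∈ W (e a) :=
  (Code.eval_part.comp ((Computable.ofNat Code).comp he) hx).dom_re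

theorem exists_computable_W_eq_s19 {L : α → Set ℕ} (hL : REPred fun x : α × ℕ => x.2 ∈ L x.1) :
    ∃ f : α → ℕ, Computable f ∧ ∀ a, W (f a) = L a := by
  obtain ⟨c, hc⟩ := exists_code_dom_iff hL
  refine ⟨fun a => Encodable.encode (c.curry (Encodable.encode a)), ?_, fun a => ?_⟩
  · exact (Primrec.encode.comp
      (Code.primrec₂_curry.comp (Primrec.const c) Primrec.encode)).to_comp
  · ext x
    simp [W, Code.eval_curry, hc (a, x)]

theorem primrecRel_mem_list : PrimrecRel fun (l : List β) (b : β) => b ∈ l :=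
  (Primrec.eq.exists_mem_list).of_eq fun l b => by simp

theorem primrec_list_inits : Primrec (List.inits : List β → List (List β)) := by
  have hmap : Primrec fun l : List β => (List.range (l.length + 1)).map fun i => l.take i :=
    Primrec.list_map (Primrec.list_range.comp (Primrec.succ.comp Primrec.list_length))
      (Primrec.list_take.comp Primrec.snd Primrec.fst)
  refine hmap.of_eq fun l => List.ext_getElem (by simp) fun i _ _ => ?_
  simp

end RecursivelyEnumerable

/-! ### Data sequences -/

section Data

variable {σ τ : Seq} {I : Informant} {L : Set ℕ} {m n : ℕ}

theorem posS_subset_iff : posS σ ⊆ L ↔ ∀ d ∈ σ, d.2 = false ∨ d.1 ∈ L := by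
  simp [posS, Set.subset_def]

theorem negS_inter_nonempty_iff : (negS σ ∩ L).Nonempty ↔ ∃ d ∈ σ, d.2 = false ∧ d.1 ∈ L := by
  simp [negS, Set.Nonempty]

theorem posS_subset_of_prefix (h : σ <+: τ) : posS σ ⊆ posS τ := fun _ hx => h.subset hx

theorem negS_subset_of_prefix (h : σ <+: τ) : negS σ ⊆ negS τ := fun _ hx => h.subset hx

theorem segment_prefix_segment (h : m ≤ n) : segment I m <+: segment I n :=
  List.prefix_iff_eq_take.2 (by simp [segment, ← List.map_take, List.take_range, h])

theorem exists_segment_of_prefix (h : σ <+: segment I n) : ∃ m ≤ n, σ = segment I m :=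
  have hσ : σ.length ≤ n := by simpa [segment] using h.length_le
  ⟨σ.length, hσ, by simpa [segment, ← List.map_take, List.take_range, hσ] using
    List.prefix_iff_eq_take.1 h⟩

theorem posS_segment_subset (I : Informant) (n : ℕ) : posS (segment I n) ⊆ posI I := by
  intro x hx
  obtain ⟨i, -, hi⟩ := List.mem_map.1 hx
  exact ⟨i, hi⟩

theorem negS_segment_subset (I : Informant) (n : ℕ) : negS (segment I n) ⊆ negI I := by
  intro x hx
  obtain ⟨i, -, hi⟩ := List.mem_map.1 hx
  exact ⟨i, hi⟩

theorem IsInformant.isInf (h : IsInformant I L) : IsInf I := ⟨rfl, h.1 ▸ h.2⟩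

theorem IsInf.disjoint_negS_posI (hI : IsInf I) (n : ℕ) : Disjoint (negS (segment I n)) (posI I) :=
  disjoint_compl_left.mono_left ((negS_segment_subset I n).trans_eq hI.2)

end Data

/-- Consistency of a language with finite data, so that `ConsH e σ` unfolds to
`ConsistentWith (W e) σ`. -/
def ConsistentWith (L : Set ℕ) (σ : Seq) : Prop := posS σ ⊆ L ∧ negS σ ∩ L = ∅

/-! ### The consistent conjecture -/

/-- The data `σ` are covered by the learner `g` if each conjecture made by `g` since the last new
positive datum of `σ` contains all positive data of `σ`. The initial segments produced since then
are those that already hold all positive data. -/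
def Covered (g : Seq →. ℕ) (σ : Seq) : Prop :=
  ∀ ρ ∈ σ.inits, posS σ ⊆ posS ρ → ∃ e ∈ g ρ, posS σ ⊆ W e

/-- The language conjectured instead of `g σ`: the positive data if `σ` is not covered, the language
of `g σ` if it is consistent with `σ`, and everything but the negative data otherwise. It is
stated without a case distinction so that it is visibly recursively enumerable. -/
def consistentLang (g : Seq →. ℕ) (σ : Seq) : Set ℕ :=
  {x | x ∈ posS σ ∨
    x ∉ negS σ ∧ Covered g σ ∧ ∃ e ∈ g σ, x ∈ W e ∨ (negS σ ∩ W e).Nonempty}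

section ConsistentLang

variable {α : Type*} [Primcodable α] {g : Seq →. ℕ} {σ τ : Seq} {e : ℕ}

theorem primrecPred_snd_eq_false : PrimrecPred fun d : Datum => d.2 = false :=
  Primrec.eq.comp Primrec.snd (Primrec.const false)

theorem rePred_posS_subset_W {σ : α → Seq} {e : α → ℕ} (hσ : Primrec σ) (he : Computable e) :
    REPred fun a => posS (σ a) ⊆ W (e a) := by
  have hdatum : REPred fun x : α × Datum => x.2.2 = false ∨ x.2.1 ∈ W (e x.1) :=
    rePred_or (primrecPred_snd_eq_false.comp Primrec.snd).computablePred.to_re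
      (rePred_mem_W (he.comp Computable.fst) (Computable.fst.comp Computable.snd))
  exact (rePred_forall_mem_list hσ hdatum).of_eq fun _ => posS_subset_iff.symm

theorem rePred_negS_inter_W_nonempty {σ : α → Seq} {e : α → ℕ} (hσ : Primrec σ)
    (he : Computable e) : REPred fun a => (negS (σ a) ∩ W (e a)).Nonempty := by
  have hdatum : REPred fun x : α × Datum => x.2.2 = false ∧ x.2.1 ∈ W (e x.1) :=
    rePred_and (primrecPred_snd_eq_false.comp Primrec.snd).computablePred.to_re
      (rePred_mem_W (he.comp Computable.fst) (Computable.fst.comp Computable.snd))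
  exact (rePred_exists_mem_list hσ hdatum).of_eq fun _ => negS_inter_nonempty_iff.symm

theorem primrecRel_posS_subset_posS : PrimrecRel fun σ τ : Seq => posS σ ⊆ posS τ := by
  have hdatum : PrimrecRel fun (d : Datum) (τ : Seq) => d.2 = false ∨ (d.1, true) ∈ τ :=
    PrimrecPred.or (primrecPred_snd_eq_false.comp Primrec.fst)
      (primrecRel_mem_list.comp Primrec.snd
        ((Primrec.fst.comp Primrec.fst).pair (Primrec.const true)))
  exact hdatum.forall_mem_list.of_eq fun _ τ => (posS_subset_iff (L := posS τ)).symm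

theorem rePred_covered (hg : Partrec g) : REPred (Covered g) := by
  have hconjecture : REPred fun x : Seq × Seq => ∃ e ∈ g x.2, posS x.1 ⊆ W e :=
    rePred_exists_mem_part (hg.comp Computable.snd)
      (rePred_posS_subset_W (Primrec.fst.comp Primrec.fst) Computable.snd)
  exact rePred_forall_mem_list primrec_list_inits
    (rePred_imp (PrimrecPred.computablePred primrecRel_posS_subset_posS) hconjecture)

theorem rePred_mem_consistentLang (hg : Partrec g) :
    REPred fun x : Seq × ℕ => x.2 ∈ consistentLang g x.1 := by
  have hmem (b : Bool) : PrimrecPred fun x : Seq × ℕ => (x.2, b) ∈ x.1 :=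
    primrecRel_mem_list.comp Primrec.fst (Primrec.snd.pair (Primrec.const b))
  have hconjecture : REPred fun x : Seq × ℕ =>
      ∃ e ∈ g x.1, x.2 ∈ W e ∨ (negS x.1 ∩ W e).Nonempty :=
    rePred_exists_mem_part (hg.comp Computable.fst)
      (rePred_or (rePred_mem_W Computable.snd (Computable.snd.comp Computable.fst))
        (rePred_negS_inter_W_nonempty (Primrec.fst.comp Primrec.fst) Computable.snd))
  exact rePred_or (hmem true).computablePred.to_re
    (rePred_and (hmem false).not.computablePred.to_re
      (rePred_and (rePred_comp (rePred_covered hg) Computable.fst) hconjecture))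

theorem Covered.of_prefix (hτ : Covered g τ) (hστ : σ <+: τ) (hpos : posS τ ⊆ posS σ) :
    Covered g σ := by
  intro ρ hρ hσρ
  obtain ⟨e, he, hτe⟩ :=
    hτ ρ ((List.mem_inits ρ τ).2 (((List.mem_inits ρ σ).1 hρ).trans hστ)) (hpos.trans hσρ)
  exact ⟨e, he, (posS_subset_of_prefix hστ).trans hτe⟩

theorem Covered.exists_mem (hσ : Covered g σ) : ∃ e ∈ g σ, posS σ ⊆ W e :=
  hσ σ ((List.mem_inits σ σ).2 List.prefix_rfl) subset_rfl

theorem consistentLang_of_not_covered (hσ : ¬ Covered g σ) : consistentLang g σ = posS σ := by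
  simp [consistentLang, hσ]

theorem consistentLang_of_consH (hσ : Covered g σ) (he : e ∈ g σ) (hcons : ConsH e σ) :
    consistentLang g σ = W e := by
  have hdisj : Disjoint (negS σ) (W e) := Set.disjoint_iff_inter_eq_empty.2 hcons.2
  ext x
  constructor
  · rintro (hx | ⟨-, -, e', he', hx⟩)
    · exact hcons.1 hx
    · obtain rfl := Part.mem_unique he he'
      exact hx.resolve_right (Set.not_nonempty_iff_eq_empty.2 hcons.2)
  · exact fun hx => Or.inr ⟨hdisj.notMem_of_mem_right hx, hσ, e, he, Or.inl hx⟩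

theorem compl_negS_subset_consistentLang (hσ : Covered g σ) (he : e ∈ g σ)
    (hneg : (negS σ ∩ W e).Nonempty) : (negS σ)ᶜ ⊆ consistentLang g σ :=
  fun _ hx => Or.inr ⟨hx, hσ, e, he, Or.inr hneg⟩

theorem consistentWith_consistentLang (g : Seq →. ℕ) (hσ : Disjoint (negS σ) (posS σ)) :
    ConsistentWith (consistentLang g σ) σ := by
  refine ⟨fun _ hx => Or.inl hx, Set.disjoint_iff_inter_eq_empty.1 ?_⟩
  refine Set.disjoint_right.2 ?_
  rintro x (hx | ⟨hx, -⟩)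
  · exact hσ.notMem_of_mem_right hx
  · exact hx

theorem consistentLang_subset_of_prefix (hdisj : Disjoint (negS τ) (posS τ)) (hστ : σ <+: τ)
    (hmon : ∀ e ∈ g σ, ConsH e τ → ∀ e' ∈ g τ, W e' ⊆ W e)
    (hcons : ConsistentWith (consistentLang g σ) τ) :
    consistentLang g τ ⊆ consistentLang g σ := by
  by_cases hτ : Covered g τ
  swap
  · exact (consistentLang_of_not_covered hτ).trans_subset hcons.1
  have hσ : Covered g σ := by
    by_contra hσ
    exact hσ (hτ.of_prefix hστ (hcons.1.trans_eq (consistentLang_of_not_covered hσ)))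
  obtain ⟨e, he, hpos⟩ := hσ.exists_mem
  obtain ⟨e', he', hpos'⟩ := hτ.exists_mem
  rcases Set.eq_empty_or_nonempty (negS σ ∩ W e) with hneg | hneg
  · have hlang : consistentLang g σ = W e := consistentLang_of_consH hσ he ⟨hpos, hneg⟩
    rw [hlang] at hcons ⊢
    have hsub : W e' ⊆ W e := hmon e he hcons e' he'
    have hneg' : negS τ ∩ W e' = ∅ :=
      Set.subset_eq_empty (Set.inter_subset_inter_right _ hsub) hcons.2
    rwa [consistentLang_of_consH hτ he' ⟨hpos', hneg'⟩]
  · calc consistentLang g τ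
        ⊆ (negS τ)ᶜ := (Set.disjoint_iff_inter_eq_empty.2
          (consistentWith_consistentLang g hdisj).2).subset_compl_left
      _ ⊆ (negS σ)ᶜ := Set.compl_subset_compl.2 (negS_subset_of_prefix hστ)
      _ ⊆ consistentLang g σ := compl_negS_subset_consistentLang hσ he hneg

end ConsistentLang

section Convergence

variable {g : Seq →. ℕ} {I : Informant}

-- A positive datum first seen at time `m ≥ N` separates the segments up to `N`, where conjectures
-- may be wrong, from all segments that matter for being covered after `m`.
theorem eventually_covered_or_posS_eq
    (hg : ∀ᶠ n in atTop, ∃ e ∈ g (segment I n), posI I ⊆ W e) :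
    ∀ᶠ n in atTop, Covered g (segment I n) ∨ posS (segment I n) = posI I := by
  obtain ⟨N, hN⟩ := eventually_atTop.1 hg
  by_cases hfin : posI I ⊆ posS (segment I N)
  · filter_upwards [eventually_ge_atTop N] with n hn
    exact Or.inr ((posS_segment_subset I n).antisymm
      (hfin.trans (posS_subset_of_prefix (segment_prefix_segment hn))))
  obtain ⟨x, ⟨m, hm⟩, hxN⟩ := Set.not_subset.1 hfin
  filter_upwards [eventually_gt_atTop m] with n hn
  refine Or.inl fun ρ hρ hpos => ?_
  obtain ⟨i, -, rfl⟩ := exists_segment_of_prefix ((List.mem_inits _ _).1 hρ)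
  have hx : x ∈ posS (segment I i) := hpos (List.mem_map.2 ⟨m, List.mem_range.2 hn, hm⟩)
  have hi : N ≤ i := by
    by_contra! hlt
    exact hxN (posS_subset_of_prefix (segment_prefix_segment hlt.le) hx)
  obtain ⟨e, he, hWe⟩ := hN i hi
  exact ⟨e, he, (posS_segment_subset I n).trans hWe⟩

theorem eventually_consistentLang_eq (hI : IsInf I)
    (hg : ∀ᶠ n in atTop, ∃ e ∈ g (segment I n), W e = posI I) :
    ∀ᶠ n in atTop, consistentLang g (segment I n) = posI I := by
  have hsub : ∀ᶠ n in atTop, ∃ e ∈ g (segment I n), posI I ⊆ W e :=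
    hg.mono fun _ ⟨e, he, hWe⟩ => ⟨e, he, hWe.superset⟩
  filter_upwards [hg, eventually_covered_or_posS_eq hsub] with n ⟨e, he, hWe⟩ hn
  by_cases hcov : Covered g (segment I n)
  · have hcons : ConsH e (segment I n) :=
      ⟨hWe ▸ posS_segment_subset I n,
        Set.disjoint_iff_inter_eq_empty.1 (hWe ▸ hI.disjoint_negS_posI n)⟩
    rw [consistentLang_of_consH hcov he hcons, hWe]
  · rw [consistentLang_of_not_covered hcov, hn.resolve_left hcov]

end Convergence

/-! ### Learners with prescribed conjectures -/

/-- The learner `h` is defined on all finite data and conjectures the language `L σ` on `σ`. -/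
def Conjectures (h : Learner) (L : Seq → Set ℕ) : Prop :=
  ∀ σ : Seq, ∃ e, h (Encodable.encode σ) = Part.some e ∧ W e = L σ

section Conjectures

variable {h : Learner} {L : Seq → Set ℕ} {I : Informant}

theorem exists_partrec_conjectures (hL : REPred fun x : Seq × ℕ => x.2 ∈ L x.1) :
    ∃ h : Learner, Partrec h ∧ Conjectures h L := by
  obtain ⟨f, hf, hW⟩ := exists_computable_W_eq_s19 hL
  refine ⟨fun n => (Encodable.decode n : Option Seq).map f,
    Computable.ofOption (Computable.option_map Computable.decode (hf.comp Computable.snd).to₂),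
    fun σ => ⟨f σ, ?_, hW σ⟩⟩
  simp

theorem Conjectures.exists_mem_Gop_iff (hL : Conjectures h L) (n : ℕ) {P : Set ℕ → Prop} :
    (∃ e ∈ Gop h I n, P (W e)) ↔ P (L (segment I n)) := by
  obtain ⟨e, he, hWe⟩ := hL (segment I n)
  simp [Gop, he, hWe]

theorem Conjectures.forall_mem_Gop_iff (hL : Conjectures h L) (n : ℕ) {P : Set ℕ → Prop} :
    (∀ e ∈ Gop h I n, P (W e)) ↔ P (L (segment I n)) := by
  obtain ⟨e, he, hWe⟩ := hL (segment I n)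
  simp [Gop, he, hWe]

theorem Conjectures.cons_iff (hL : Conjectures h L) :
    Cons (Gop h I) I ↔ ∀ n, ConsistentWith (L (segment I n)) (segment I n) :=
  forall_congr' fun n => hL.exists_mem_Gop_iff n (P := (ConsistentWith · (segment I n)))

theorem Conjectures.bc_iff (hL : Conjectures h L) :
    Bc (Gop h I) I ↔ ∀ᶠ n in atTop, L (segment I n) = posI I :=
  eventually_congr (.of_forall fun n => hL.exists_mem_Gop_iff n (P := (· = posI I)))

theorem Conjectures.wmond_iff (hL : Conjectures h L) :
    WMond (Gop h I) I ↔ ∀ s t, s ≤ t →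
      ConsistentWith (L (segment I s)) (segment I t) → L (segment I t) ⊆ L (segment I s) := by
  refine forall₃_congr fun s t _ => ?_
  rw [← hL.forall_mem_Gop_iff s
    (P := fun A => ConsistentWith A (segment I t) → L (segment I t) ⊆ A)]
  exact forall₃_congr fun e _ _ => hL.forall_mem_Gop_iff t (P := (· ⊆ W e))

end Conjectures

theorem exists_consistent_learner {h : Learner} (hh : Partrec h) :
    ∃ h' : Learner, Partrec h' ∧ ∀ I, IsInf I → Cons (Gop h' I) I ∧
      (WMond (Gop h I) I → WMond (Gop h' I) I) ∧ (Bc (Gop h I) I → Bc (Gop h' I) I) := by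
  let g : Seq →. ℕ := fun σ => h (Encodable.encode σ)
  have hg : Partrec g := hh.comp Computable.encode
  obtain ⟨h', hh', hL⟩ := exists_partrec_conjectures (rePred_mem_consistentLang hg)
  refine ⟨h', hh', fun I hI => ?_⟩
  have hdisj (n : ℕ) : Disjoint (negS (segment I n)) (posS (segment I n)) :=
    (hI.disjoint_negS_posI n).mono_right (posS_segment_subset I n)
  refine ⟨hL.cons_iff.2 fun n => consistentWith_consistentLang g (hdisj n),
    fun hmon => hL.wmond_iff.2 fun s t hst => ?_,
    fun hbc => hL.bc_iff.2 (eventually_consistentLang_eq hI hbc)⟩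
  exact consistentLang_subset_of_prefix (hdisj t) (segment_prefix_segment hst) (hmon s t hst)

/-- `[τ(Cons) Inf G WMon^d Bc] = [Inf G WMon^d Bc]`. -/
theorem global_cons_no_restriction_dual_wmon_bc :
    Learnable Cons AllL AllI Gop (fun p I => WMond p I ∧ Bc p I) =
      Learnable TT AllL AllI Gop (fun p I => WMond p I ∧ Bc p I) := by
  ext 𝓛
  constructor
  · rintro ⟨h, hh, hC, -, hlearns⟩
    exact ⟨h, hh, hC, fun _ _ _ => trivial, hlearns⟩
  · rintro ⟨h, hh, -, -, hlearns⟩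
    obtain ⟨h', hh', hh'_spec⟩ := exists_consistent_learner hh
    refine ⟨h', hh', trivial, fun I hI _ => (hh'_spec I hI).1, fun L hL => ?_⟩
    obtain ⟨hre, hδ⟩ := hlearns L hL
    refine ⟨hre, fun I hP hIL => ?_⟩
    obtain ⟨-, hwmond, hbc⟩ := hh'_spec I hIL.isInf
    exact (hδ I hP hIL).imp hwmond hbc

end InfBc
end
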